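/- arXiv:1012.1513 — 2 statements merged into one kernel-verified Lean document; each statement's English description precedes it below -/
import Mathlib

section
/- Let τ satisfy 1/2 + 1/√2 ≤ τ < 3/2 and let γ ∈ [0, π/4] be such that sin(2γ) > C_τ, where C_τ = 2·√(2(τ−1)(2τ−1)(3−2τ))/(5 − 8τ + 4τ²). Then for all POVM elements A₀,A₁,B₀,B₁ on ℂ², the state |ψ^γ⟩ does not violate the tilted-CH inequality: S^(τ)(ρ_γ; A₀,A₁,B₀,B₁) ≤ 0. (Thus an observed violation S^(τ) > 0 yields the semi-device-independent upper bound sin(2γ) ≤ C_τ on the concurrence.) -/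
open Matrix
open scoped Kronecker ComplexOrder

/-- `A` is a POVM element on `ℂ^d`: both `A` and `1 - A` are positive semidefinite. -/
def IsPOVMElem {d : ℕ} (A : Matrix (Fin d) (Fin d) ℂ) : Prop :=
  A.PosSemidef ∧ (1 - A).PosSemidef

/-- `ρ` is a density matrix: positive semidefinite with unit trace. -/
def IsDensityMatrix {n : Type*} [Fintype n] [DecidableEq n]
    (ρ : Matrix n n ℂ) : Prop :=
  ρ.PosSemidef ∧ ρ.trace = 1

/-- The tilted-CH Bell value `S^(τ)(ρ; A₀,A₁,B₀,B₁)`. -/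
noncomputable def tiltedCHBell {d : ℕ} (τ : ℝ)
    (ρ : Matrix (Fin d × Fin d) (Fin d × Fin d) ℂ)
    (A0 A1 B0 B1 : Matrix (Fin d) (Fin d) ℂ) : ℝ :=
  (Matrix.trace (ρ * (A0 ⊗ₖ B0 + A0 ⊗ₖ B1 + A1 ⊗ₖ B0 - A1 ⊗ₖ B1))).re
    - τ * (Matrix.trace (ρ * (A0 ⊗ₖ (1 : Matrix (Fin d) (Fin d) ℂ)))).re
    - τ * (Matrix.trace (ρ * ((1 : Matrix (Fin d) (Fin d) ℂ) ⊗ₖ B0))).re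

/-- The `d`-dimensional maximally entangled state `|Ψ⁺_d⟩` as a vector. -/
noncomputable def maxEntVec (d : ℕ) : Fin d × Fin d → ℂ :=
  fun jk => if jk.1 = jk.2 then (1 / Real.sqrt d : ℂ) else 0

/-- The density matrix `ρ_d⁺ = |Ψ⁺_d⟩⟨Ψ⁺_d|`. -/
noncomputable def maxEntState (d : ℕ) :
    Matrix (Fin d × Fin d) (Fin d × Fin d) ℂ :=
  Matrix.vecMulVec (maxEntVec d) (fun jk => starRingEnd ℂ (maxEntVec d jk))

/-- The two-qubit pure state `|ψ^γ⟩ = cos γ |00⟩ + sin γ |11⟩` as a vector. -/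
noncomputable def schmidtVec (γ : ℝ) : Fin 2 × Fin 2 → ℂ :=
  fun jk =>
    if jk = (0, 0) then (Real.cos γ : ℂ)
    else if jk = (1, 1) then (Real.sin γ : ℂ) else 0

/-- The density matrix `ρ_γ = |ψ^γ⟩⟨ψ^γ|`. -/
noncomputable def schmidtState (γ : ℝ) :
    Matrix (Fin 2 × Fin 2) (Fin 2 × Fin 2) ℂ :=
  Matrix.vecMulVec (schmidtVec γ) (fun jk => starRingEnd ℂ (schmidtVec γ jk))

open scoped InnerProductSpace MatrixOrder

/-!
The Bell value is affine in the pair of Alice's effects and in the pair of Bob's, and every effect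
is a convex combination of projections, so it suffices to bound it on projections. If one of the
four projections is `0` or `1`, then minus the Bell value is a combination of probabilities with
nonnegative coefficients, because `1 ≤ τ`. Otherwise they are given by unit Bloch vectors
`a₀`, `a₁`, `b₀`, `b₁`, and with `T = diag(sin 2γ, -sin 2γ, 1)` the correlation part of the Bell
value is at most `(‖T(b₀ + b₁)‖ + ‖T(b₀ - b₁)‖) / 4`. The vectors `b₀ ± b₁` are orthogonal, so
Bessel's inequality for their directions together with Cauchy–Schwarz gives
`‖T(b₀ + b₁)‖ + ‖T(b₀ - b₁)‖ ≤ 2√(1 + sin² 2γ)`. The resulting bound on the Bell value is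
nonpositive as soon as `√(1 + sin² 2γ) ≤ 1 + 2(τ - 1)(1 - |cos 2γ|)`, which follows from
`|sin 2γ| ≥ C_τ`.
-/

section Bessel

variable {E F : Type*} [NormedAddCommGroup E] [InnerProductSpace ℝ E]
  [SeminormedAddCommGroup F] [NormedSpace ℝ F]

theorem inner_sq_add_inner_sq_le {u v : E} (hu : ‖u‖ ≤ 1) (hv : ‖v‖ ≤ 1) (huv : ⟪u, v⟫_ℝ = 0)
    (e : E) : ⟪u, e⟫_ℝ ^ 2 + ⟪v, e⟫_ℝ ^ 2 ≤ ‖e‖ ^ 2 := by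
  set α := ⟪u, e⟫_ℝ
  set β := ⟪v, e⟫_ℝ
  have hres : ‖e - (α • u + β • v)‖ ^ 2 =
      ‖e‖ ^ 2 - 2 * (α ^ 2 + β ^ 2) + (α ^ 2 * ‖u‖ ^ 2 + β ^ 2 * ‖v‖ ^ 2) := by
    rw [norm_sub_sq_real, norm_add_sq_real]
    simp only [inner_add_right, inner_smul_left, inner_smul_right, norm_smul, huv, mul_pow,
      Real.norm_eq_abs, sq_abs, real_inner_comm u e, real_inner_comm v e]
    simp only [Real.ringHom_apply, mul_zero, add_zero, α, β]
    ring
  have hα : α ^ 2 * ‖u‖ ^ 2 ≤ α ^ 2 :=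
    mul_le_of_le_one_right (sq_nonneg α) (pow_le_one₀ (norm_nonneg u) hu)
  have hβ : β ^ 2 * ‖v‖ ^ 2 ≤ β ^ 2 :=
    mul_le_of_le_one_right (sq_nonneg β) (pow_le_one₀ (norm_nonneg v) hv)
  linarith [sq_nonneg ‖e - (α • u + β • v)‖]

theorem norm_map_add_norm_map_le (T : E →ₗ[ℝ] F) {a b : ℝ} (ha : 0 ≤ a) (hb : 0 ≤ b) {e : E}
    (hT : ∀ v, ‖T v‖ ^ 2 ≤ a * ‖v‖ ^ 2 + b * ⟪v, e⟫_ℝ ^ 2) {p q : E} (hpq : ⟪p, q⟫_ℝ = 0) :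
    ‖T p‖ + ‖T q‖ ≤ √(2 * a + b * ‖e‖ ^ 2) * √(‖p‖ ^ 2 + ‖q‖ ^ 2) := by
  -- `‖w‖⁻¹ • w` is `0` for `w = 0`, so the zero vector needs no separate treatment.
  have hle (w : E) : ‖‖w‖⁻¹ • w‖ ≤ 1 := by
    simpa [norm_smul] using inv_mul_le_one (a := ‖w‖)
  have hmap (w : E) : ‖T w‖ = ‖T (‖w‖⁻¹ • w)‖ * ‖w‖ := by
    rcases eq_or_ne w 0 with rfl | hw
    · simp
    · simp [norm_smul, mul_comm ‖w‖⁻¹, hw]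
  set u := ‖p‖⁻¹ • p
  set v := ‖q‖⁻¹ • q
  have huv : ⟪u, v⟫_ℝ = 0 := by simp [u, v, inner_smul_left, inner_smul_right, hpq]
  have hbessel := inner_sq_add_inner_sq_le (hle p) (hle q) huv e
  have hu : a * ‖u‖ ^ 2 ≤ a := mul_le_of_le_one_right ha (pow_le_one₀ (norm_nonneg u) (hle p))
  have hv : a * ‖v‖ ^ 2 ≤ a := mul_le_of_le_one_right ha (pow_le_one₀ (norm_nonneg v) (hle q))
  have huv_sq : ‖T u‖ ^ 2 + ‖T v‖ ^ 2 ≤ 2 * a + b * ‖e‖ ^ 2 := by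
    linarith [hT u, hT v, mul_le_mul_of_nonneg_left hbessel hb]
  calc ‖T p‖ + ‖T q‖ = ‖T u‖ * ‖p‖ + ‖T v‖ * ‖q‖ := by rw [hmap p, hmap q]
    _ ≤ √(‖T u‖ ^ 2 + ‖T v‖ ^ 2) * √(‖p‖ ^ 2 + ‖q‖ ^ 2) := by
      simpa using Real.sum_mul_le_sqrt_mul_sqrt Finset.univ ![‖T u‖, ‖T v‖] ![‖p‖, ‖q‖]
    _ ≤ √(2 * a + b * ‖e‖ ^ 2) * √(‖p‖ ^ 2 + ‖q‖ ^ 2) := by gcongr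

end Bessel

section Effects

theorem add_map_le_of_mem_convexHull {𝕜 E F : Type*} [Field 𝕜] [LinearOrder 𝕜]
    [IsStrictOrderedRing 𝕜] [AddCommGroup E] [Module 𝕜 E] [AddCommGroup F] [Module 𝕜 F]
    {f : E →ₗ[𝕜] 𝕜} {g : F →ₗ[𝕜] 𝕜} {s : Set E} {t : Set F} {c : 𝕜}
    (h : ∀ x ∈ s, ∀ y ∈ t, f x + g y ≤ c) {x : E} {y : F} (hx : x ∈ convexHull 𝕜 s)
    (hy : y ∈ convexHull 𝕜 t) : f x + g y ≤ c := by
  have hxy : (x, y) ∈ convexHull 𝕜 (s ×ˢ t) := by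
    rw [convexHull_prod]
    exact ⟨hx, hy⟩
  have hst : s ×ˢ t ⊆ {z | f.coprod g z ≤ c} := fun z hz => h z.1 hz.1 z.2 hz.2
  exact convexHull_min hst (convex_halfSpace_le (f.coprod g).isLinear c) hxy

theorem diagonal_mem_convexHull_isStarProjection {n : Type*} [Fintype n] [DecidableEq n]
    {t : n → ℝ} (ht : ∀ i, t i ∈ Set.Icc 0 1) :
    diagonal (Complex.ofReal ∘ t) ∈ convexHull ℝ {P : Matrix n n ℂ | IsStarProjection P} := by
  let diag : (n → ℝ) →ₗ[ℝ] Matrix n n ℂ :=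
    diagonalLinearMap n ℝ ℂ ∘ₗ Complex.ofRealCLM.toLinearMap.compLeft n
  have hcube : t ∈ convexHull ℝ (Set.univ.pi fun _ => ({0, 1} : Set ℝ)) :=
    mem_convexHull_pi fun i _ => by simpa [convexHull_pair, segment_eq_Icc] using ht i
  have hdiag : diag t ∈ diag '' convexHull ℝ (Set.univ.pi fun _ => ({0, 1} : Set ℝ)) :=
    Set.mem_image_of_mem diag hcube
  rw [diag.image_convexHull] at hdiag
  refine convexHull_mono ?_ hdiag
  rintro _ ⟨x, hx, rfl⟩
  have hx01 (i : n) : x i = 0 ∨ x i = 1 := by simpa using hx i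
  change IsStarProjection (diagonal (Complex.ofReal ∘ x))
  refine ⟨?_, ?_⟩
  · rw [IsIdempotentElem, diagonal_mul_diagonal]
    congr! 2 with i
    rcases hx01 i with h | h <;> simp [h]
  · exact isHermitian_diagonal_of_self_adjoint _ (funext fun i => Complex.conj_ofReal (x i))

variable {d : ℕ} {A : Matrix (Fin d) (Fin d) ℂ}

theorem isPOVMElem_of_isStarProjection (hA : IsStarProjection A) : IsPOVMElem A :=
  ⟨nonneg_iff_posSemidef.mp hA.nonneg, nonneg_iff_posSemidef.mp hA.one_sub.nonneg⟩

theorem IsPOVMElem.eigenvalues_mem_Icc (hA : IsPOVMElem A) (hH : A.IsHermitian) (i : Fin d) :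
    hH.eigenvalues i ∈ Set.Icc 0 1 := by
  have hle : A ≤ algebraMap ℝ _ 1 := by simpa using le_iff.mpr hA.2
  exact ⟨hA.1.eigenvalues_nonneg i,
    (le_algebraMap_iff_spectrum_le (a := A) hH).mp hle _ (hH.eigenvalues_mem_spectrum_real i)⟩

theorem IsPOVMElem.mem_convexHull_isStarProjection (hA : IsPOVMElem A) :
    A ∈ convexHull ℝ {P | IsStarProjection P} := by
  have hH := hA.1.isHermitian
  let U := Unitary.conjStarAlgAut ℝ _ hH.eigenvectorUnitary
  have hspec : U (diagonal (Complex.ofReal ∘ hH.eigenvalues)) = A := hH.spectral_theorem.symm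
  have hU : IsLinearMap ℝ U := ⟨map_add U, map_smul U⟩
  have hconv := (convex_convexHull ℝ {P | IsStarProjection P}).is_linear_preimage hU
  rw [← hspec]
  refine convexHull_min (fun P hP => ?_) hconv
    (diagonal_mem_convexHull_isStarProjection (hA.eigenvalues_mem_Icc hH))
  exact subset_convexHull ℝ _ (IsStarProjection.map hP U)

end Effects

section Born

theorem re_trace_mul_nonneg {n : Type*} [Fintype n] {ρ M : Matrix n n ℂ}
    (hρ : ρ.PosSemidef) (hM : M.PosSemidef) : 0 ≤ (trace (ρ * M)).re := by
  classical
  obtain ⟨B, rfl⟩ := CStarAlgebra.nonneg_iff_eq_star_mul_self.mp hρ.nonneg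
  rw [Matrix.mul_assoc, trace_mul_comm]
  exact (Complex.le_def.mp (hM.mul_mul_conjTranspose_same B).trace_nonneg).1

variable {m n : Type*} [Fintype m] [Fintype n]

/-- The Born rule as a bilinear form: `bornForm ρ A B = Re tr(ρ (A ⊗ B))` is the joint probability
of the effects `A` and `B` in the state `ρ`. -/
noncomputable def bornForm
    (ρ : Matrix (m × n) (m × n) ℂ) : Matrix m m ℂ →ₗ[ℝ] Matrix n n ℂ →ₗ[ℝ] ℝ :=
  (kroneckerBilinear (R := ℝ)).compr₂ <|
    Complex.reLm ∘ₗ traceLinearMap (m × n) ℝ ℂ ∘ₗ LinearMap.mulLeft ℝ ρ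

theorem bornForm_apply (ρ : Matrix (m × n) (m × n) ℂ) (A : Matrix m m ℂ) (B : Matrix n n ℂ) :
    bornForm ρ A B = (trace (ρ * (A ⊗ₖ B))).re :=
  rfl

theorem bornForm_nonneg {ρ : Matrix (m × n) (m × n) ℂ} (hρ : ρ.PosSemidef)
    {A : Matrix m m ℂ} {B : Matrix n n ℂ} (hA : A.PosSemidef) (hB : B.PosSemidef) :
    0 ≤ bornForm ρ A B :=
  re_trace_mul_nonneg hρ (hA.kronecker hB)

theorem bornForm_submatrix_swap (ρ : Matrix (m × n) (m × n) ℂ) (A : Matrix m m ℂ)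
    (B : Matrix n n ℂ) :
    bornForm (ρ.submatrix Prod.swap Prod.swap) B A = bornForm ρ A B := by
  simp only [bornForm_apply, trace, diag_apply, mul_apply, submatrix_apply, Complex.re_sum]
  refine Fintype.sum_equiv (Equiv.prodComm n m) _ _ fun i => ?_
  refine Fintype.sum_equiv (Equiv.prodComm n m) _ _ fun j => ?_
  simp only [kroneckerMap_apply, Equiv.prodComm_apply, Prod.fst_swap, Prod.snd_swap,
    mul_comm (B _ _)]

end Born

section Bell

variable {d : ℕ} {τ : ℝ} {ρ : Matrix (Fin d × Fin d) (Fin d × Fin d) ℂ}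
  {A0 A1 B0 B1 : Matrix (Fin d) (Fin d) ℂ}

theorem tiltedCHBell_eq_bornForm (τ : ℝ) (ρ : Matrix (Fin d × Fin d) (Fin d × Fin d) ℂ)
    (A0 A1 B0 B1 : Matrix (Fin d) (Fin d) ℂ) :
    tiltedCHBell τ ρ A0 A1 B0 B1 =
      bornForm ρ A0 B0 + bornForm ρ A0 B1 + bornForm ρ A1 B0 - bornForm ρ A1 B1
        - τ * bornForm ρ A0 1 - τ * bornForm ρ 1 B0 := by
  simp [tiltedCHBell, bornForm_apply, Matrix.mul_add, Matrix.mul_sub]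

theorem tiltedCHBell_submatrix_swap (τ : ℝ) (ρ : Matrix (Fin d × Fin d) (Fin d × Fin d) ℂ)
    (A0 A1 B0 B1 : Matrix (Fin d) (Fin d) ℂ) :
    tiltedCHBell τ (ρ.submatrix Prod.swap Prod.swap) B0 B1 A0 A1 =
      tiltedCHBell τ ρ A0 A1 B0 B1 := by
  simp only [tiltedCHBell_eq_bornForm, bornForm_submatrix_swap]
  ring

theorem tiltedCHBell_nonpos_of_forall_isStarProjection_left
    (h : ∀ P Q, IsStarProjection P → IsStarProjection Q → tiltedCHBell τ ρ P Q B0 B1 ≤ 0)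
    (hA0 : IsPOVMElem A0) (hA1 : IsPOVMElem A1) : tiltedCHBell τ ρ A0 A1 B0 B1 ≤ 0 := by
  have haffine (A A' : Matrix (Fin d) (Fin d) ℂ) : tiltedCHBell τ ρ A A' B0 B1 =
      (bornForm ρ).flip (B0 + B1 - τ • 1) A + (bornForm ρ).flip (B0 - B1) A'
        - τ * bornForm ρ 1 B0 := by
    simp only [tiltedCHBell_eq_bornForm, map_add, map_sub, map_smul, LinearMap.add_apply,
      LinearMap.sub_apply, LinearMap.smul_apply, LinearMap.flip_apply, smul_eq_mul]
    ring
  simp only [haffine, sub_nonpos] at h ⊢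
  exact add_map_le_of_mem_convexHull (fun P hP Q hQ => h P Q hP hQ)
    hA0.mem_convexHull_isStarProjection hA1.mem_convexHull_isStarProjection

theorem tiltedCHBell_nonpos_of_forall_isStarProjection
    (h : ∀ P0 P1 Q0 Q1, IsStarProjection P0 → IsStarProjection P1 → IsStarProjection Q0 →
      IsStarProjection Q1 → tiltedCHBell τ ρ P0 P1 Q0 Q1 ≤ 0)
    (hA0 : IsPOVMElem A0) (hA1 : IsPOVMElem A1) (hB0 : IsPOVMElem B0) (hB1 : IsPOVMElem B1) :
    tiltedCHBell τ ρ A0 A1 B0 B1 ≤ 0 := by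
  refine tiltedCHBell_nonpos_of_forall_isStarProjection_left (fun P0 P1 hP0 hP1 => ?_) hA0 hA1
  rw [← tiltedCHBell_submatrix_swap]
  refine tiltedCHBell_nonpos_of_forall_isStarProjection_left (fun Q0 Q1 hQ0 hQ1 => ?_) hB0 hB1
  rw [tiltedCHBell_submatrix_swap]
  exact h P0 P1 Q0 Q1 hP0 hP1 hQ0 hQ1

theorem tiltedCHBell_nonpos_of_deterministic_left (hτ : 1 ≤ τ) (hρ : ρ.PosSemidef)
    (hA0 : IsPOVMElem A0) (hA1 : IsPOVMElem A1) (hB0 : IsPOVMElem B0) (hB1 : IsPOVMElem B1)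
    (hdet : A0 = 0 ∨ A0 = 1 ∨ A1 = 0 ∨ A1 = 1) : tiltedCHBell τ ρ A0 A1 B0 B1 ≤ 0 := by
  have hA : 0 ≤ (τ - 1) * bornForm ρ A0 1 :=
    mul_nonneg (sub_nonneg.mpr hτ) (bornForm_nonneg hρ hA0.1 .one)
  have hB : 0 ≤ (τ - 1) * bornForm ρ 1 B0 :=
    mul_nonneg (sub_nonneg.mpr hτ) (bornForm_nonneg hρ .one hB0.1)
  rw [tiltedCHBell_eq_bornForm]
  rcases hdet with rfl | rfl | rfl | rfl
  · have hprob := bornForm_nonneg hρ hA1.2 hB0.1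
    have hprob' := bornForm_nonneg hρ hA1.1 hB1.1
    simp only [map_sub, map_zero, LinearMap.sub_apply, LinearMap.zero_apply] at *
    linarith
  · have hprob := bornForm_nonneg hρ hA1.2 hB1.2
    have hprob' := bornForm_nonneg hρ hA1.1 hB0.2
    simp only [map_sub, LinearMap.sub_apply] at *
    linarith
  · have hprob := bornForm_nonneg hρ hA0.1 hB1.2
    have hprob' := bornForm_nonneg hρ hA0.2 hB0.1
    simp only [map_sub, map_zero, LinearMap.sub_apply, LinearMap.zero_apply] at *
    linarith
  · have hprob := bornForm_nonneg hρ hA0.1 hB0.2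
    have hprob' := bornForm_nonneg hρ hA0.2 hB1.1
    simp only [map_sub, LinearMap.sub_apply] at *
    linarith

theorem tiltedCHBell_nonpos_of_deterministic_right (hτ : 1 ≤ τ) (hρ : ρ.PosSemidef)
    (hA0 : IsPOVMElem A0) (hA1 : IsPOVMElem A1) (hB0 : IsPOVMElem B0) (hB1 : IsPOVMElem B1)
    (hdet : B0 = 0 ∨ B0 = 1 ∨ B1 = 0 ∨ B1 = 1) : tiltedCHBell τ ρ A0 A1 B0 B1 ≤ 0 := by
  rw [← tiltedCHBell_submatrix_swap]
  exact tiltedCHBell_nonpos_of_deterministic_left hτ (hρ.submatrix _) hB0 hB1 hA0 hA1 hdet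

end Bell

section Qubit

/-- The Hermitian matrix `(1 + v · σ) / 2` of trace one with Bloch vector `v`, where `σ` is the
triple of Pauli matrices. It is a projection exactly when `v` is a unit vector. -/
noncomputable def blochProj (v : EuclideanSpace ℝ (Fin 3)) : Matrix (Fin 2) (Fin 2) ℂ :=
  (1 / 2 : ℂ) • !![1 + (v 2 : ℂ), v 0 - v 1 * Complex.I; v 0 + v 1 * Complex.I, 1 - v 2]

theorem blochProj_eq (v : EuclideanSpace ℝ (Fin 3)) :
    blochProj v =
      !![⟨(1 + v 2) / 2, 0⟩, ⟨v 0 / 2, -v 1 / 2⟩; ⟨v 0 / 2, v 1 / 2⟩, ⟨(1 - v 2) / 2, 0⟩] := by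
  ext i j
  fin_cases i <;> fin_cases j <;> simp [blochProj, Complex.ext_iff, inv_mul_eq_div, neg_div]

theorem exists_eq_blochProj {P : Matrix (Fin 2) (Fin 2) ℂ} (hP : P.IsHermitian)
    (htr : P.trace = 1) : ∃ v, P = blochProj v := by
  have hdiag (i : Fin 2) : (P i i).im = 0 := Complex.conj_eq_iff_im.mp (hP.apply i i)
  have hoff : P 1 0 = star (P 0 1) := (hP.apply 1 0).symm
  have hre : (P 0 0).re + (P 1 1).re = 1 := by
    simpa [trace_fin_two] using congrArg Complex.re htr
  refine ⟨!₂[2 * (P 0 1).re, -2 * (P 0 1).im, (P 0 0).re - (P 1 1).re], ?_⟩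
  ext i j
  fin_cases i <;> fin_cases j <;> simp [blochProj_eq, Complex.ext_iff, hdiag, hoff] <;> linarith

theorem re_blochProj_mul_self_apply_zero_zero (v : EuclideanSpace ℝ (Fin 3)) :
    ((blochProj v * blochProj v) 0 0).re = (blochProj v 0 0).re + (‖v‖ ^ 2 - 1) / 4 := by
  simp only [EuclideanSpace.real_norm_sq_eq, Fin.sum_univ_three, blochProj_eq, mul_apply,
    Fin.sum_univ_two, of_apply, cons_val', cons_val_zero, cons_val_one, cons_val_fin_one,
    Complex.add_re, Complex.mul_re]
  ring

theorem norm_eq_one_of_isIdempotentElem_blochProj {v : EuclideanSpace ℝ (Fin 3)}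
    (hv : IsIdempotentElem (blochProj v)) : ‖v‖ = 1 := by
  have h := re_blochProj_mul_self_apply_zero_zero v
  rw [hv.eq, left_eq_add] at h
  exact (pow_eq_one_iff_of_nonneg (norm_nonneg v) two_ne_zero).mp (by linarith)

theorem eq_zero_or_one_or_trace_eq_one {K : Type*} [Field K] {P : Matrix (Fin 2) (Fin 2) K}
    (hP : IsIdempotentElem P) : P = 0 ∨ P = 1 ∨ P.trace = 1 := by
  rw [← or_assoc, or_iff_not_imp_right]
  intro htr
  have hcayley : P ^ 2 - P.trace • P + P.det • 1 = 0 := by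
    simpa [charpoly_fin_two, Algebra.algebraMap_eq_smul_one] using aeval_self_charpoly P
  have hscalar : (P.trace - 1) • P = P.det • 1 := by
    rw [sub_smul, one_smul, ← sub_eq_zero, ← neg_eq_zero, ← hcayley, pow_two, hP.eq]
    abel
  obtain ⟨t, rfl⟩ : ∃ t : K, P = t • 1 :=
    ⟨(P.trace - 1)⁻¹ * P.det, by
      rw [mul_smul, ← hscalar, inv_smul_smul₀ (sub_ne_zero.mpr htr)]⟩
  have ht : t * t = t := by simpa using congr_fun₂ hP.eq 0 0
  rcases IsIdempotentElem.iff_eq_zero_or_one.mp ht with rfl | rfl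
  · exact Or.inl (zero_smul K 1)
  · exact Or.inr (one_smul K 1)

theorem exists_unit_eq_blochProj {P : Matrix (Fin 2) (Fin 2) ℂ} (hP : IsStarProjection P) :
    P = 0 ∨ P = 1 ∨ ∃ v, ‖v‖ = 1 ∧ P = blochProj v := by
  refine (eq_zero_or_one_or_trace_eq_one hP.isIdempotentElem).imp_right (Or.imp_right fun htr => ?_)
  obtain ⟨v, rfl⟩ := exists_eq_blochProj hP.isSelfAdjoint htr
  exact ⟨v, norm_eq_one_of_isIdempotentElem_blochProj hP.isIdempotentElem, rfl⟩

theorem tiltedCHBell_nonpos_of_forall_blochProj {τ : ℝ}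
    {ρ : Matrix (Fin 2 × Fin 2) (Fin 2 × Fin 2) ℂ} (hτ : 1 ≤ τ) (hρ : ρ.PosSemidef)
    (h : ∀ a0 a1 b0 b1, ‖a0‖ = 1 → ‖a1‖ = 1 → ‖b0‖ = 1 → ‖b1‖ = 1 →
      tiltedCHBell τ ρ (blochProj a0) (blochProj a1) (blochProj b0) (blochProj b1) ≤ 0)
    {A0 A1 B0 B1 : Matrix (Fin 2) (Fin 2) ℂ} (hA0 : IsPOVMElem A0) (hA1 : IsPOVMElem A1)
    (hB0 : IsPOVMElem B0) (hB1 : IsPOVMElem B1) : tiltedCHBell τ ρ A0 A1 B0 B1 ≤ 0 := by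
  refine tiltedCHBell_nonpos_of_forall_isStarProjection
    (fun P0 P1 Q0 Q1 hP0 hP1 hQ0 hQ1 => ?_) hA0 hA1 hB0 hB1
  have hleft := tiltedCHBell_nonpos_of_deterministic_left hτ hρ
    (isPOVMElem_of_isStarProjection hP0) (isPOVMElem_of_isStarProjection hP1)
    (isPOVMElem_of_isStarProjection hQ0) (isPOVMElem_of_isStarProjection hQ1)
  have hright := tiltedCHBell_nonpos_of_deterministic_right hτ hρ
    (isPOVMElem_of_isStarProjection hP0) (isPOVMElem_of_isStarProjection hP1)
    (isPOVMElem_of_isStarProjection hQ0) (isPOVMElem_of_isStarProjection hQ1)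
  rcases exists_unit_eq_blochProj hP0 with hdet | hdet | ⟨a0, ha0, rfl⟩
  · exact hleft (by tauto)
  · exact hleft (by tauto)
  rcases exists_unit_eq_blochProj hP1 with hdet | hdet | ⟨a1, ha1, rfl⟩
  · exact hleft (by tauto)
  · exact hleft (by tauto)
  rcases exists_unit_eq_blochProj hQ0 with hdet | hdet | ⟨b0, hb0, rfl⟩
  · exact hright (by tauto)
  · exact hright (by tauto)
  rcases exists_unit_eq_blochProj hQ1 with hdet | hdet | ⟨b1, hb1, rfl⟩
  · exact hright (by tauto)
  · exact hright (by tauto)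
  exact h a0 a1 b0 b1 ha0 ha1 hb0 hb1

end Qubit

section Schmidt

theorem posSemidef_schmidtState (γ : ℝ) : (schmidtState γ).PosSemidef :=
  posSemidef_vecMulVec_self_star (schmidtVec γ)

theorem bornForm_schmidtState (γ : ℝ) (A B : Matrix (Fin 2) (Fin 2) ℂ) :
    bornForm (schmidtState γ) A B =
      Real.cos γ ^ 2 * (A 0 0 * B 0 0).re + Real.sin γ ^ 2 * (A 1 1 * B 1 1).re +
        Real.cos γ * Real.sin γ * (A 0 1 * B 0 1 + A 1 0 * B 1 0).re := by
  simp only [bornForm_apply, schmidtState, schmidtVec, trace, diag_apply, mul_apply,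
    vecMulVec_apply, kroneckerMap_apply, Fintype.sum_prod_type, Fin.sum_univ_two, Prod.mk.injEq,
    ite_mul, zero_mul, Finset.sum_ite_irrel, Finset.sum_const_zero, zero_ne_one, one_ne_zero,
    and_true, and_false, ↓reduceIte, Complex.conj_ofReal, map_zero, mul_zero, add_zero, zero_add,
    Complex.add_re, Complex.mul_re, Complex.mul_im, Complex.ofReal_re, Complex.ofReal_im, sub_zero]
  ring

/-- The correlation matrix `diag(sin 2γ, -sin 2γ, 1)` of `schmidtState γ`: its entries are the
expectation values of the products `σᵢ ⊗ σⱼ` of Pauli matrices. -/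
noncomputable def schmidtCorrelation (γ : ℝ) :
    EuclideanSpace ℝ (Fin 3) →ₗ[ℝ] EuclideanSpace ℝ (Fin 3) :=
  toEuclideanLin (diagonal ![Real.sin (2 * γ), -Real.sin (2 * γ), 1])

variable (γ : ℝ) (a b v : EuclideanSpace ℝ (Fin 3))

theorem schmidtCorrelation_apply :
    schmidtCorrelation γ v = !₂[Real.sin (2 * γ) * v 0, -Real.sin (2 * γ) * v 1, v 2] := by
  ext i
  fin_cases i <;> simp [schmidtCorrelation, mulVec_diagonal]

theorem inner_schmidtCorrelation :
    ⟪a, schmidtCorrelation γ b⟫_ℝ =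
      Real.sin (2 * γ) * (a 0 * b 0 - a 1 * b 1) + a 2 * b 2 := by
  simp only [schmidtCorrelation_apply, PiLp.inner_apply, Fin.sum_univ_three, RCLike.inner_apply,
    conj_trivial, cons_val]
  ring

theorem norm_schmidtCorrelation_sq :
    ‖schmidtCorrelation γ v‖ ^ 2 = Real.sin (2 * γ) ^ 2 * ‖v‖ ^ 2 +
      Real.cos (2 * γ) ^ 2 * ⟪v, EuclideanSpace.single 2 1⟫_ℝ ^ 2 := by
  simp only [schmidtCorrelation_apply, EuclideanSpace.real_norm_sq_eq, Fin.sum_univ_three,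
    EuclideanSpace.inner_single_right, conj_trivial, Real.cos_sq', cons_val]
  ring

theorem bornForm_schmidtState_blochProj :
    bornForm (schmidtState γ) (blochProj a) (blochProj b) =
      (1 + Real.cos (2 * γ) * (a 2 + b 2) + ⟪a, schmidtCorrelation γ b⟫_ℝ) / 4 := by
  rw [bornForm_schmidtState, inner_schmidtCorrelation, Real.cos_two_mul', Real.sin_two_mul]
  simp only [blochProj_eq, of_apply, cons_val', cons_val_zero, cons_val_one, cons_val_fin_one,
    Complex.add_re, Complex.mul_re]
  linear_combination (1 + a 2 * b 2) / 4 * Real.cos_sq_add_sin_sq γ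

theorem bornForm_schmidtState_blochProj_one :
    bornForm (schmidtState γ) (blochProj a) 1 = (1 + Real.cos (2 * γ) * a 2) / 2 := by
  rw [bornForm_schmidtState, Real.cos_two_mul']
  simp only [blochProj_eq, of_apply, cons_val', cons_val_zero, cons_val_one, cons_val_fin_one,
    one_apply_eq, one_apply_ne, ne_eq, zero_ne_one, one_ne_zero, not_false_eq_true, mul_one,
    mul_zero, add_zero, Complex.zero_re]
  linear_combination Real.cos_sq_add_sin_sq γ / 2

theorem bornForm_schmidtState_one_blochProj :
    bornForm (schmidtState γ) 1 (blochProj b) = (1 + Real.cos (2 * γ) * b 2) / 2 := by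
  rw [bornForm_schmidtState, Real.cos_two_mul']
  simp only [blochProj_eq, of_apply, cons_val', cons_val_zero, cons_val_one, cons_val_fin_one,
    one_apply_eq, one_apply_ne, ne_eq, zero_ne_one, one_ne_zero, not_false_eq_true, one_mul,
    mul_zero, zero_mul, add_zero, Complex.zero_re]
  linear_combination Real.cos_sq_add_sin_sq γ / 2

theorem tiltedCHBell_schmidtState_blochProj (τ γ : ℝ) (a0 a1 b0 b1 : EuclideanSpace ℝ (Fin 3)) :
    tiltedCHBell τ (schmidtState γ) (blochProj a0) (blochProj a1) (blochProj b0) (blochProj b1) =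
      (⟪a0, schmidtCorrelation γ (b0 + b1)⟫_ℝ + ⟪a1, schmidtCorrelation γ (b0 - b1)⟫_ℝ) / 4
        - (τ - 1) / 2 * (Real.cos (2 * γ) * (a0 2 + b0 2)) - (τ - 1 / 2) := by
  simp only [tiltedCHBell_eq_bornForm, bornForm_schmidtState_blochProj,
    bornForm_schmidtState_blochProj_one, bornForm_schmidtState_one_blochProj, map_add, map_sub,
    inner_add_right, inner_sub_right]
  ring

theorem inner_schmidtCorrelation_add_le {a0 a1 b0 b1 : EuclideanSpace ℝ (Fin 3)}
    (ha0 : ‖a0‖ = 1) (ha1 : ‖a1‖ = 1) (hb0 : ‖b0‖ = 1) (hb1 : ‖b1‖ = 1) :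
    ⟪a0, schmidtCorrelation γ (b0 + b1)⟫_ℝ + ⟪a1, schmidtCorrelation γ (b0 - b1)⟫_ℝ ≤
      2 * √(1 + Real.sin (2 * γ) ^ 2) := by
  have horth : ⟪b0 + b1, b0 - b1⟫_ℝ = 0 := by
    rw [real_inner_add_sub_eq_zero_iff, hb0, hb1]
  have hpar : ‖b0 + b1‖ ^ 2 + ‖b0 - b1‖ ^ 2 = 2 ^ 2 := by
    linear_combination parallelogram_law_with_norm ℝ b0 b1 + 2 * (‖b0‖ + 1) * hb0 +
      2 * (‖b1‖ + 1) * hb1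
  calc ⟪a0, schmidtCorrelation γ (b0 + b1)⟫_ℝ + ⟪a1, schmidtCorrelation γ (b0 - b1)⟫_ℝ
      ≤ ‖schmidtCorrelation γ (b0 + b1)‖ + ‖schmidtCorrelation γ (b0 - b1)‖ := by
        gcongr
        · simpa [ha0] using real_inner_le_norm a0 (schmidtCorrelation γ (b0 + b1))
        · simpa [ha1] using real_inner_le_norm a1 (schmidtCorrelation γ (b0 - b1))
    _ ≤ √(2 * Real.sin (2 * γ) ^ 2 +
          Real.cos (2 * γ) ^ 2 * ‖(EuclideanSpace.single 2 1 : EuclideanSpace ℝ (Fin 3))‖ ^ 2) *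
          √(‖b0 + b1‖ ^ 2 + ‖b0 - b1‖ ^ 2) :=
        norm_map_add_norm_map_le _ (sq_nonneg _) (sq_nonneg _)
          (fun v => (norm_schmidtCorrelation_sq γ v).le) horth
    _ = 2 * √(1 + Real.sin (2 * γ) ^ 2) := by
        rw [hpar, Real.sqrt_sq zero_le_two, PiLp.norm_single, norm_one, Real.cos_sq',
          mul_comm]
        ring_nf

theorem tiltedCHBell_schmidtState_blochProj_nonpos {τ γ : ℝ} (hτ : 1 ≤ τ)
    (h : √(1 + Real.sin (2 * γ) ^ 2) ≤ 1 + 2 * (τ - 1) * (1 - |Real.cos (2 * γ)|))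
    {a0 a1 b0 b1 : EuclideanSpace ℝ (Fin 3)}
    (ha0 : ‖a0‖ = 1) (ha1 : ‖a1‖ = 1) (hb0 : ‖b0‖ = 1) (hb1 : ‖b1‖ = 1) :
    tiltedCHBell τ (schmidtState γ) (blochProj a0) (blochProj a1) (blochProj b0) (blochProj b1)
      ≤ 0 := by
  have hcorr := inner_schmidtCorrelation_add_le γ ha0 ha1 hb0 hb1
  have hlocal : -(Real.cos (2 * γ) * (a0 2 + b0 2)) ≤ |Real.cos (2 * γ)| * 2 := by
    have ha0_le : |a0 2| ≤ 1 := ha0 ▸ PiLp.norm_apply_le a0 2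
    have hb0_le : |b0 2| ≤ 1 := hb0 ▸ PiLp.norm_apply_le b0 2
    refine (neg_le_abs _).trans ?_
    rw [abs_mul]
    gcongr
    linarith [abs_add_le (a0 2) (b0 2)]
  have hscaled := mul_le_mul_of_nonneg_left hlocal (sub_nonneg.mpr hτ)
  rw [tiltedCHBell_schmidtState_blochProj]
  linarith

theorem tiltedCHBell_schmidtState_nonpos {τ γ : ℝ} (hτ : 1 ≤ τ)
    (h : √(1 + Real.sin (2 * γ) ^ 2) ≤ 1 + 2 * (τ - 1) * (1 - |Real.cos (2 * γ)|))
    {A0 A1 B0 B1 : Matrix (Fin 2) (Fin 2) ℂ} (hA0 : IsPOVMElem A0) (hA1 : IsPOVMElem A1)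
    (hB0 : IsPOVMElem B0) (hB1 : IsPOVMElem B1) :
    tiltedCHBell τ (schmidtState γ) A0 A1 B0 B1 ≤ 0 :=
  tiltedCHBell_nonpos_of_forall_blochProj hτ (posSemidef_schmidtState γ)
    (fun _ _ _ _ => tiltedCHBell_schmidtState_blochProj_nonpos hτ h) hA0 hA1 hB0 hB1

end Schmidt

section ConcurrenceBound

/-- The concurrence threshold `C_τ`. For `τ ≥ 3 / 2` the radicand is not positive, so that
`concurrenceBound τ = 0`. -/
noncomputable def concurrenceBound (τ : ℝ) : ℝ :=
  2 * √(2 * (τ - 1) * (2 * τ - 1) * (3 - 2 * τ)) / (5 - 8 * τ + 4 * τ ^ 2)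

theorem sqrt_two_le_two_mul_sub_one {τ : ℝ} (hτ : 1 / 2 + 1 / √2 ≤ τ) : √2 ≤ 2 * τ - 1 := by
  rw [← Real.sqrt_div_self'] at hτ
  linarith

-- For `1/2 + 1/√2 ≤ τ ≤ 3/2`, `C_τ` is the sine of the acute angle with cosine
-- `((2τ - 1)² - 2) / (5 - 8τ + 4τ²)`.
theorem mul_abs_cos_le_of_concurrenceBound_le {τ θ : ℝ} (hτ : √2 ≤ 2 * τ - 1)
    (hC : concurrenceBound τ ≤ |Real.sin θ|) :
    (5 - 8 * τ + 4 * τ ^ 2) * |Real.cos θ| ≤ (2 * τ - 1) ^ 2 - 2 := by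
  rw [concurrenceBound] at hC
  set D := 5 - 8 * τ + 4 * τ ^ 2 with hD
  have hD_pos : 0 < D := by nlinarith [sq_nonneg (τ - 1)]
  have hrad : 2 * (τ - 1) * (2 * τ - 1) * (3 - 2 * τ) ≤ (|Real.sin θ| * D / 2) ^ 2 := by
    refine (Real.sqrt_le_iff.mp ?_).2
    linarith [(div_le_iff₀ hD_pos).mp hC]
  have hτ_sq : 2 ≤ (2 * τ - 1) ^ 2 := (Real.sqrt_le_iff.mp hτ).2
  refine le_of_sq_le_sq ?_ (sub_nonneg.mpr hτ_sq)
  calc (D * |Real.cos θ|) ^ 2 = D ^ 2 - (|Real.sin θ| * D) ^ 2 := by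
        rw [mul_pow, mul_pow, sq_abs, sq_abs, Real.cos_sq']
        ring
    _ ≤ D ^ 2 - 4 * (2 * (τ - 1) * (2 * τ - 1) * (3 - 2 * τ)) := by linarith
    _ = ((2 * τ - 1) ^ 2 - 2) ^ 2 := by
        rw [hD]
        ring

theorem sqrt_one_add_sin_sq_le {τ θ : ℝ} (hτ : 1 ≤ τ)
    (hcos : (5 - 8 * τ + 4 * τ ^ 2) * |Real.cos θ| ≤ (2 * τ - 1) ^ 2 - 2) :
    √(1 + Real.sin θ ^ 2) ≤ 1 + 2 * (τ - 1) * (1 - |Real.cos θ|) := by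
  have hcos_le : 0 ≤ 1 - |Real.cos θ| := sub_nonneg.mpr (Real.abs_cos_le_one θ)
  have hdiff : (1 + 2 * (τ - 1) * (1 - |Real.cos θ|)) ^ 2 - (1 + Real.sin θ ^ 2) =
      (1 - |Real.cos θ|) *
        ((2 * τ - 1) ^ 2 - 2 - (5 - 8 * τ + 4 * τ ^ 2) * |Real.cos θ|) := by
    rw [Real.sin_sq, ← sq_abs (Real.cos θ)]
    ring
  refine Real.sqrt_le_iff.mpr ⟨by nlinarith, sub_nonneg.mp ?_⟩
  rw [hdiff]
  exact mul_nonneg hcos_le (sub_nonneg.mpr hcos)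

end ConcurrenceBound

theorem no_violation_of_concurrence_gt_C_tau_general
    (τ : ℝ) (hτ : 1 / 2 + 1 / √2 ≤ τ) (γ : ℝ)
    (hC : concurrenceBound τ ≤ |Real.sin (2 * γ)|)
    (A0 A1 B0 B1 : Matrix (Fin 2) (Fin 2) ℂ)
    (hA0 : IsPOVMElem A0) (hA1 : IsPOVMElem A1)
    (hB0 : IsPOVMElem B0) (hB1 : IsPOVMElem B1) :
    tiltedCHBell τ (schmidtState γ) A0 A1 B0 B1 ≤ 0 := by
  have hτ_sqrt : √2 ≤ 2 * τ - 1 := sqrt_two_le_two_mul_sub_one hτ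
  have hτ_one : 1 ≤ τ := by linarith [Real.one_le_sqrt.mpr one_le_two]
  have hcos := mul_abs_cos_le_of_concurrenceBound_le hτ_sqrt hC
  exact tiltedCHBell_schmidtState_nonpos hτ_one (sqrt_one_add_sin_sq_le hτ_one hcos)
    hA0 hA1 hB0 hB1

/-- for `1/2 + 1/√2 ≤ τ < 3/2`, any two-qubit pure state `|ψ^γ⟩`
whose concurrence `sin 2γ` exceeds `C_τ` cannot violate the tilted-CH inequality
`I^(τ)`, whatever POVM elements are measured. -/
theorem no_violation_of_concurrence_gt_C_tau
    (τ : ℝ) (hτ₁ : 1 / 2 + 1 / Real.sqrt 2 ≤ τ) (hτ₂ : τ < 3 / 2)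
    (γ : ℝ) (hγ₀ : 0 ≤ γ) (hγ₁ : γ ≤ Real.pi / 4)
    (hC : 2 * Real.sqrt (2 * (τ - 1) * (2 * τ - 1) * (3 - 2 * τ)) /
        (5 - 8 * τ + 4 * τ ^ 2) < Real.sin (2 * γ))
    (A0 A1 B0 B1 : Matrix (Fin 2) (Fin 2) ℂ)
    (hA0 : IsPOVMElem A0) (hA1 : IsPOVMElem A1)
    (hB0 : IsPOVMElem B0) (hB1 : IsPOVMElem B1) :
    tiltedCHBell τ (schmidtState γ) A0 A1 B0 B1 ≤ 0 :=
  no_violation_of_concurrence_gt_C_tau_general τ hτ₁ γ (hC.le.trans (le_abs_self _))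
    A0 A1 B0 B1 hA0 hA1 hB0 hB1
end

section
/- For every d ≥ 1, every density matrix ρ on ℂ^d⊗ℂ^d, all POVM elements A₀,A₁,B₀,B₁ on ℂ^d, and every τ ≥ 1, the tilted-CH Bell value obeys the Tsirelson-type bound S^(τ)(ρ; A₀,A₁,B₀,B₁) ≤ 1/√2 − 1/2. -/
open Matrix
open scoped Kronecker ComplexOrder

/-!
An effect `0 ≤ p ≤ 1` yields an observable `a = 2p - 1` with `a² ≤ 1`, and at `τ = 1` the Bell
operator is `(CHSH - 2) / 4` in these observables. Tsirelson's sum-of-squares decomposition survives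
the passage from `a² = 1` to `a² ≤ 1`: with `s = 1/√2`,
`2√2 - CHSH = s ((a₀ - s (b₀ + b₁))² + (a₁ - s (b₀ - b₁))² + ∑ (1 - aᵢ²) + ∑ (1 - bⱼ²))`.
Increasing `τ` beyond `1` only subtracts positive operators.
-/

section CHSH

theorem smul_one_sub_chsh_eq {R : Type*} [Ring R] [Algebra ℝ R] {a₀ a₁ b₀ b₁ : R}
    (h₀₀ : Commute a₀ b₀) (h₀₁ : Commute a₀ b₁) (h₁₀ : Commute a₁ b₀) (h₁₁ : Commute a₁ b₁)
    {s : ℝ} (hs : s * s = 1 / 2) :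
    (4 * s) • (1 : R) - (a₀ * b₀ + a₀ * b₁ + a₁ * b₀ - a₁ * b₁) =
      s • ((a₀ - s • (b₀ + b₁)) * (a₀ - s • (b₀ + b₁)) +
        (a₁ - s • (b₀ - b₁)) * (a₁ - s • (b₀ - b₁)) +
        ((1 - a₀ * a₀) + (1 - a₁ * a₁) + (1 - b₀ * b₀) + (1 - b₁ * b₁))) := by
  simp only [mul_add, add_mul, mul_sub, sub_mul, smul_mul_assoc, mul_smul_comm,
    ← h₀₀.eq, ← h₀₁.eq, ← h₁₀.eq, ← h₁₁.eq]
  match_scalars <;> grind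

variable {R : Type*} [Ring R] [PartialOrder R] [StarRing R] [StarOrderedRing R]
  [Algebra ℝ R] [IsOrderedModule ℝ R] [StarModule ℝ R]

theorem chsh_le_of_mul_self_le_one {a₀ a₁ b₀ b₁ : R}
    (ha₀ : IsSelfAdjoint a₀) (ha₁ : IsSelfAdjoint a₁)
    (hb₀ : IsSelfAdjoint b₀) (hb₁ : IsSelfAdjoint b₁)
    (ha₀_sq : a₀ * a₀ ≤ 1) (ha₁_sq : a₁ * a₁ ≤ 1) (hb₀_sq : b₀ * b₀ ≤ 1) (hb₁_sq : b₁ * b₁ ≤ 1)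
    (h₀₀ : Commute a₀ b₀) (h₀₁ : Commute a₀ b₁) (h₁₀ : Commute a₁ b₀) (h₁₁ : Commute a₁ b₁) :
    a₀ * b₀ + a₀ * b₁ + a₁ * b₀ - a₁ * b₁ ≤ (2 * √2) • (1 : R) := by
  have hs : 1 / √2 * (1 / √2) = 1 / 2 := by
    rw [div_mul_div_comm, one_mul, Real.mul_self_sqrt zero_le_two]
  have h_bound : 2 * √2 = 4 * (1 / √2) := by
    rw [← Real.sqrt_div_self']; ring
  have h_smul {x : R} (hx : IsSelfAdjoint x) : IsSelfAdjoint ((1 / √2) • x) :=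
    (IsSelfAdjoint.all _).smul hx
  rw [← sub_nonneg, h_bound, smul_one_sub_chsh_eq h₀₀ h₀₁ h₁₀ h₁₁ hs]
  refine smul_nonneg (by positivity) (add_nonneg (add_nonneg ?_ ?_) ?_)
  · exact (ha₀.sub (h_smul (hb₀.add hb₁))).mul_self_nonneg
  · exact (ha₁.sub (h_smul (hb₀.sub hb₁))).mul_self_nonneg
  · exact add_nonneg (add_nonneg (add_nonneg (sub_nonneg.2 ha₀_sq) (sub_nonneg.2 ha₁_sq))
      (sub_nonneg.2 hb₀_sq)) (sub_nonneg.2 hb₁_sq)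

end CHSH

section Effects

theorem isSelfAdjoint_two_mul_sub_one {R : Type*} [Ring R] [StarRing R] {p : R}
    (hp : IsSelfAdjoint p) : IsSelfAdjoint (2 * p - 1) := by
  simpa only [two_mul] using (hp.add hp).sub (.one R)

theorem commute_two_mul_sub_one {R : Type*} [Ring R] {p q : R} (h : Commute p q) :
    Commute (2 * p - 1) (2 * q - 1) := by
  simpa only [two_mul] using
    (((h.add_right h).add_left (h.add_right h)).sub_left (.one_left _)).sub_right (.one_right _)

theorem chsh_two_mul_sub_one {R : Type*} [Ring R] (p₀ p₁ q₀ q₁ : R) :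
    (2 * p₀ - 1) * (2 * q₀ - 1) + (2 * p₀ - 1) * (2 * q₁ - 1) +
        (2 * p₁ - 1) * (2 * q₀ - 1) - (2 * p₁ - 1) * (2 * q₁ - 1) =
      4 • (p₀ * q₀ + p₀ * q₁ + p₁ * q₀ - p₁ * q₁ - p₀ - q₀) + 2 • 1 := by
  noncomm_ring

variable {R : Type*} [Ring R] [PartialOrder R] [StarRing R] [StarOrderedRing R]

theorem mul_self_le_self_of_mem_Icc {p : R} (hp : p ∈ Set.Icc 0 1) : p * p ≤ p := by
  have h_nonneg : 0 ≤ p * (1 - p) * p + (1 - p) * p * (1 - p) :=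
    add_nonneg (conjugate_nonneg_of_nonneg (sub_nonneg.2 hp.2) hp.1)
      (conjugate_nonneg_of_nonneg hp.1 (sub_nonneg.2 hp.2))
  have h_eq : p * (1 - p) * p + (1 - p) * p * (1 - p) = p - p * p := by noncomm_ring
  rwa [h_eq, sub_nonneg] at h_nonneg

theorem two_mul_sub_one_mul_self_le_one {p : R} (hp : p ∈ Set.Icc 0 1) :
    (2 * p - 1) * (2 * p - 1) ≤ 1 := by
  have h_nonneg : 0 ≤ 4 • (p - p * p) :=
    nsmul_nonneg (sub_nonneg.2 (mul_self_le_self_of_mem_Icc hp)) 4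
  have h_eq : 4 • (p - p * p) = 1 - (2 * p - 1) * (2 * p - 1) := by noncomm_ring
  rwa [h_eq, sub_nonneg] at h_nonneg

variable [Algebra ℝ R] [IsOrderedModule ℝ R] [StarModule ℝ R] {p₀ p₁ q₀ q₁ : R}

theorem ch_le_of_mem_Icc
    (hp₀ : p₀ ∈ Set.Icc 0 1) (hp₁ : p₁ ∈ Set.Icc 0 1)
    (hq₀ : q₀ ∈ Set.Icc 0 1) (hq₁ : q₁ ∈ Set.Icc 0 1)
    (h₀₀ : Commute p₀ q₀) (h₀₁ : Commute p₀ q₁) (h₁₀ : Commute p₁ q₀) (h₁₁ : Commute p₁ q₁) :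
    p₀ * q₀ + p₀ * q₁ + p₁ * q₀ - p₁ * q₁ - p₀ - q₀ ≤ (1 / √2 - 1 / 2) • (1 : R) := by
  have h_sa {p : R} (hp : p ∈ Set.Icc 0 1) : IsSelfAdjoint (2 * p - 1) :=
    isSelfAdjoint_two_mul_sub_one (.of_nonneg hp.1)
  have h_chsh := chsh_le_of_mul_self_le_one (h_sa hp₀) (h_sa hp₁) (h_sa hq₀) (h_sa hq₁)
    (two_mul_sub_one_mul_self_le_one hp₀) (two_mul_sub_one_mul_self_le_one hp₁)
    (two_mul_sub_one_mul_self_le_one hq₀) (two_mul_sub_one_mul_self_le_one hq₁)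
    (commute_two_mul_sub_one h₀₀) (commute_two_mul_sub_one h₀₁)
    (commute_two_mul_sub_one h₁₀) (commute_two_mul_sub_one h₁₁)
  have h_bound : 1 / √2 - 1 / 2 = 1 / 4 * (2 * √2 - 2) := by
    rw [← Real.sqrt_div_self']; ring
  rw [chsh_two_mul_sub_one, ← sub_nonneg] at h_chsh
  rw [h_bound, ← sub_nonneg]
  convert smul_nonneg (by norm_num : (0 : ℝ) ≤ 1 / 4) h_chsh using 1
  module

theorem tiltedCH_le_of_mem_Icc
    (hp₀ : p₀ ∈ Set.Icc 0 1) (hp₁ : p₁ ∈ Set.Icc 0 1)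
    (hq₀ : q₀ ∈ Set.Icc 0 1) (hq₁ : q₁ ∈ Set.Icc 0 1)
    (h₀₀ : Commute p₀ q₀) (h₀₁ : Commute p₀ q₁) (h₁₀ : Commute p₁ q₀) (h₁₁ : Commute p₁ q₁)
    {τ : ℝ} (hτ : 1 ≤ τ) :
    p₀ * q₀ + p₀ * q₁ + p₁ * q₀ - p₁ * q₁ - τ • p₀ - τ • q₀ ≤ (1 / √2 - 1 / 2) • (1 : R) :=
  calc
    _ ≤ p₀ * q₀ + p₀ * q₁ + p₁ * q₀ - p₁ * q₁ - p₀ - q₀ :=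
      sub_le_sub (sub_le_sub_left (le_smul_of_one_le_left hp₀.1 hτ) _)
        (le_smul_of_one_le_left hq₀.1 hτ)
    _ ≤ _ := ch_le_of_mem_Icc hp₀ hp₁ hq₀ hq₁ h₀₀ h₀₁ h₁₀ h₁₁

end Effects

section Matrices

open scoped MatrixOrder

theorem IsPOVMElem.mem_Icc {d : ℕ} {A : Matrix (Fin d) (Fin d) ℂ} (hA : IsPOVMElem A) :
    A ∈ Set.Icc 0 1 :=
  ⟨hA.1.nonneg, le_iff.2 hA.2⟩

open scoped Matrix.Norms.L2Operator in
theorem trace_mul_nonneg_of_posSemidef {𝕜 n : Type*} [RCLike 𝕜] [Fintype n]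
    {ρ X : Matrix n n 𝕜} (hρ : ρ.PosSemidef) (hX : X.PosSemidef) : 0 ≤ (ρ * X).trace := by
  classical
  obtain ⟨C, rfl⟩ := CStarAlgebra.nonneg_iff_eq_star_mul_self.1 hρ.nonneg
  rw [Matrix.mul_assoc, trace_mul_comm]
  exact (hX.mul_mul_conjTranspose_same C).trace_nonneg

theorem trace_mul_le_trace_mul_of_posSemidef {𝕜 n : Type*} [RCLike 𝕜] [Fintype n]
    {ρ X Y : Matrix n n 𝕜} (hρ : ρ.PosSemidef) (hXY : X ≤ Y) : (ρ * X).trace ≤ (ρ * Y).trace := by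
  rw [← sub_nonneg, ← trace_sub, ← mul_sub]
  exact trace_mul_nonneg_of_posSemidef hρ hXY

variable {𝕜 m n : Type*} [DecidableEq m] [DecidableEq n]

theorem kronecker_one_mem_Icc [RCLike 𝕜] [Finite m] [Finite n] {A : Matrix m m 𝕜}
    (hA : A ∈ Set.Icc 0 1) :
    A ⊗ₖ (1 : Matrix n n 𝕜) ∈ Set.Icc 0 1 := by
  have := Fintype.ofFinite m
  have := Fintype.ofFinite n
  have h_compl : (1 - A) ⊗ₖ (1 : Matrix n n 𝕜) = 1 - A ⊗ₖ 1 := by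
    rw [eq_sub_iff_add_eq, ← add_kronecker, sub_add_cancel, one_kronecker_one]
  refine ⟨(hA.1.posSemidef.kronecker .one).nonneg, ?_⟩
  rw [le_iff, ← h_compl]
  exact PosSemidef.kronecker hA.2 .one

theorem one_kronecker_mem_Icc [RCLike 𝕜] [Finite m] [Finite n] {B : Matrix n n 𝕜}
    (hB : B ∈ Set.Icc 0 1) :
    (1 : Matrix m m 𝕜) ⊗ₖ B ∈ Set.Icc 0 1 := by
  have := Fintype.ofFinite m
  have := Fintype.ofFinite n
  have h_compl : (1 : Matrix m m 𝕜) ⊗ₖ (1 - B) = 1 - 1 ⊗ₖ B := by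
    rw [eq_sub_iff_add_eq, ← kronecker_add, sub_add_cancel, one_kronecker_one]
  refine ⟨(PosSemidef.one.kronecker hB.1.posSemidef).nonneg, ?_⟩
  rw [le_iff, ← h_compl]
  exact PosSemidef.one.kronecker hB.2

variable [Fintype m] [Fintype n]

theorem kronecker_one_mul_one_kronecker [CommSemiring 𝕜] (A : Matrix m m 𝕜) (B : Matrix n n 𝕜) :
    A ⊗ₖ (1 : Matrix n n 𝕜) * (1 : Matrix m m 𝕜) ⊗ₖ B = A ⊗ₖ B := by
  rw [← mul_kronecker_mul, mul_one, one_mul]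

theorem commute_kronecker_one_one_kronecker [CommSemiring 𝕜]
    (A : Matrix m m 𝕜) (B : Matrix n n 𝕜) :
    Commute (A ⊗ₖ (1 : Matrix n n 𝕜)) ((1 : Matrix m m 𝕜) ⊗ₖ B) := by
  simp only [commute_iff_eq, ← mul_kronecker_mul, mul_one, one_mul]

theorem tiltedCHBell_tsirelson_general {ρ : Matrix (m × n) (m × n) ℂ} (hρ : IsDensityMatrix ρ)
    {A₀ A₁ : Matrix m m ℂ} {B₀ B₁ : Matrix n n ℂ}
    (hA₀ : A₀ ∈ Set.Icc 0 1) (hA₁ : A₁ ∈ Set.Icc 0 1)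
    (hB₀ : B₀ ∈ Set.Icc 0 1) (hB₁ : B₁ ∈ Set.Icc 0 1) {τ : ℝ} (hτ : 1 ≤ τ) :
    (trace (ρ * (A₀ ⊗ₖ B₀ + A₀ ⊗ₖ B₁ + A₁ ⊗ₖ B₀ - A₁ ⊗ₖ B₁))).re
      - τ * (trace (ρ * (A₀ ⊗ₖ (1 : Matrix n n ℂ)))).re
      - τ * (trace (ρ * ((1 : Matrix m m ℂ) ⊗ₖ B₀))).re ≤ 1 / √2 - 1 / 2 := by
  have h_op := tiltedCH_le_of_mem_Icc
    (kronecker_one_mem_Icc (n := n) hA₀) (kronecker_one_mem_Icc hA₁)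
    (one_kronecker_mem_Icc (m := m) hB₀) (one_kronecker_mem_Icc hB₁)
    (commute_kronecker_one_one_kronecker _ _) (commute_kronecker_one_one_kronecker _ _)
    (commute_kronecker_one_one_kronecker _ _) (commute_kronecker_one_one_kronecker _ _) hτ
  have h_trace := (Complex.le_def.1 (trace_mul_le_trace_mul_of_posSemidef hρ.1 h_op)).1
  simpa only [kronecker_one_mul_one_kronecker, mul_sub, mul_smul_comm, mul_one,
    trace_sub, trace_smul, hρ.2, Complex.sub_re, Complex.smul_re, Complex.one_re,
    smul_eq_mul] using h_trace

end Matrices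

/-- the tilted-CH Bell value obeys the Tsirelson-type bound
`S^(τ) ≤ 1/√2 − 1/2` for every `τ ≥ 1`, in every dimension. -/
theorem tiltedCHBell_tsirelson
    (d : ℕ) (hd : 1 ≤ d)
    (ρ : Matrix (Fin d × Fin d) (Fin d × Fin d) ℂ)
    (hρ : IsDensityMatrix ρ)
    (A0 A1 B0 B1 : Matrix (Fin d) (Fin d) ℂ)
    (hA0 : IsPOVMElem A0) (hA1 : IsPOVMElem A1)
    (hB0 : IsPOVMElem B0) (hB1 : IsPOVMElem B1)
    (τ : ℝ) (hτ : 1 ≤ τ) :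
    tiltedCHBell τ ρ A0 A1 B0 B1 ≤ 1 / Real.sqrt 2 - 1 / 2 :=
  tiltedCHBell_tsirelson_general hρ hA0.mem_Icc hA1.mem_Icc hB0.mem_Icc hB1.mem_Icc hτ
end
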